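/- Let H ∈ (1/2, 1), α_H = H(2H−1), and c_H = Γ(2H+1) sin(πH)/(2π). Let φ, ψ : ℝ → [0, ∞) be integrable functions such that the energies E(φ) := α_H ∫_ℝ ∫_ℝ φ(x) φ(y) |x − y|^{2H−2} dx dy and E(ψ) are finite. Then α_H ∫_ℝ ∫_ℝ φ(x) ψ(y) |x − y|^{2H−2} dx dy = c_H ∫_ℝ (𝓕φ)(ξ) conj((𝓕ψ)(ξ)) |ξ|^{1−2H} dξ, and in particular E(φ) = c_H ∫_ℝ |(𝓕φ)(ξ)|² |ξ|^{1−2H} dξ. -/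

import Mathlib

open MeasureTheory Real

/-- The Fourier transform `(𝓕φ)(ξ) = ∫ e^{-iξx} φ(x) dx` of a real-valued function. -/
noncomputable def fourierT (φ : ℝ → ℝ) (ξ : ℝ) : ℂ :=
  ∫ x : ℝ, Complex.exp (-(Complex.I * (ξ : ℂ) * (x : ℂ))) * (φ x : ℂ)

lemma auxA (H : ℝ) (h2 : H < 1) (x : ℝ) (hx : x ≠ 0) :
    ∫ t in Set.Ioi (0:ℝ), t ^ (-H) * Real.exp (-(t * x ^ 2)) = Gamma (1 - H) * |x| ^ (2 * H - 2) := by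
  have h := Real.integral_rpow_mul_exp_neg_mul_Ioi (a := 1 - H) (r := x ^ 2) (by linarith)
    (by positivity)
  have e : (1 / x ^ 2) ^ (1 - H) = |x| ^ (2 * H - 2) := by
    rw [← sq_abs, one_div, Real.inv_rpow (by positivity), ← Real.rpow_neg (by positivity),
      ← Real.rpow_natCast, ← Real.rpow_mul (by positivity)]
    congr 1; push_cast; ring
  rw [e, mul_comm (|x| ^ _)] at h
  rw [← h]
  congr 1; ext t
  rw [mul_comm t, show 1 - H - 1 = -H by ring]

lemma auxB (H : ℝ) (h1 : 1 / 2 < H) (x : ℝ) (hx : x ≠ 0) :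
    ∫ t in Set.Ioi (0:ℝ), t ^ (-H) * t ^ (-(1/2) : ℝ) * Real.exp (-(x ^ 2 / (4 * t)))
      = Gamma (H - 1 / 2) * 2 ^ (2 * H - 1) * |x| ^ (1 - 2 * H) := by
  rw [← integral_comp_rpow_Ioi _ (show (-1 : ℝ) ≠ 0 by norm_num)]
  have h := Real.integral_rpow_mul_exp_neg_mul_Ioi (a := H - 1 / 2) (r := x ^ 2 / 4) (by linarith)
    (by positivity)
  have e : (1 / (x ^ 2 / 4)) ^ (H - 1 / 2) = 2 ^ (2 * H - 1) * |x| ^ (1 - 2 * H) := by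
    rw [← sq_abs, show (1 / (|x| ^ 2 / 4)) = (2 / |x|) ^ 2 by field_simp; norm_num,
      ← Real.rpow_natCast, ← Real.rpow_mul (by positivity), Real.div_rpow (by positivity) (by positivity),
      div_eq_mul_inv, ← Real.rpow_neg (by positivity)]
    congr 2 <;> push_cast <;> ring
  rw [e] at h
  rw [mul_assoc, mul_comm (Gamma _), ← h]
  refine setIntegral_congr_fun measurableSet_Ioi fun t ht => ?_
  have ht : 0 < t := ht
  simp only [smul_eq_mul]
  rw [← Real.rpow_mul ht.le, ← Real.rpow_mul ht.le, abs_neg, abs_one, one_mul,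
    ← Real.rpow_add ht, ← mul_assoc, ← Real.rpow_add ht, Real.rpow_neg_one]
  congr 1
  · congr 1; ring
  · congr 2; field_simp

lemma auxConst (H : ℝ) (h1 : 1 / 2 < H) (h2 : H < 1) :
    H * (2 * H - 1) * (1 / (2 * √π) * (Gamma (H - 1 / 2) * 2 ^ (2 * H - 1)))
      = Gamma (2 * H + 1) * Real.sin (π * H) / (2 * π) * Gamma (1 - H) := by
  have hs : 0 < Real.sin (π * H) := Real.sin_pos_of_pos_of_lt_pi (by positivity)
    (by nlinarith [Real.pi_pos])
  have hG : 0 < Gamma H := Real.Gamma_pos_of_pos (by linarith)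
  have r1 := Real.Gamma_mul_Gamma_one_sub H
  have r2 := Real.Gamma_mul_Gamma_add_half (H - 1 / 2)
  rw [show H - 1 / 2 + 1 / 2 = H by ring, show 2 * (H - 1 / 2) = 2 * H - 1 by ring] at r2
  have r3 : Gamma (2 * H + 1) = 2 * H * ((2 * H - 1) * Gamma (2 * H - 1)) := by
    rw [Real.Gamma_add_one (by linarith)]
    congr 1
    rw [← Real.Gamma_add_one (by linarith)]; congr 1; ring
  have r4 : (2:ℝ) ^ (1 - (2 * H - 1)) * 2 ^ (2 * H - 1) = 2 := by
    rw [← Real.rpow_add (by norm_num)]; ring_nf; norm_num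
  have e1 : Gamma (1 - H) = π / Real.sin (π * H) / Gamma H := by
    rw [← r1]; field_simp
  have e2 : Gamma (H - 1 / 2) = Gamma (2 * H - 1) * 2 ^ (1 - (2 * H - 1)) * √π / Gamma H := by
    rw [← r2]; field_simp
  rw [e1, e2, r3]
  have hp : 0 < √π := Real.sqrt_pos.2 Real.pi_pos
  have : H * (2 * H - 1) * (1 / (2 * √π) * (Gamma (2 * H - 1) * 2 ^ (1 - (2 * H - 1)) * √π / Gamma H * 2 ^ (2 * H - 1)))
    = H * (2 * H - 1) * Gamma (2 * H - 1) / (2 * Gamma H) * ((2:ℝ) ^ (1 - (2 * H - 1)) * 2 ^ (2 * H - 1)) := by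
    field_simp
  rw [this, r4]
  generalize Real.sin (π * H) = S at hs
  field_simp

lemma fourierT_bound (φ : ℝ → ℝ) (ξ : ℝ) : ‖fourierT φ ξ‖ ≤ ∫ x, ‖φ x‖ := by
  refine (norm_integral_le_integral_norm _).trans (le_of_eq ?_)
  congr 1; ext x
  rw [norm_mul, Complex.norm_exp, Complex.norm_real]
  simp

lemma fourierT_cont (φ : ℝ → ℝ) (h : Integrable φ) : Continuous (fourierT φ) := by
  refine continuous_of_dominated (bound := fun x => ‖φ x‖) ?_ ?_ h.norm ?_
  · intro ξ
    exact (Continuous.aestronglyMeasurable (by fun_prop)).mul h.ofReal.aestronglyMeasurable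
  · intro ξ
    refine Filter.Eventually.of_forall fun x => ?_
    rw [norm_mul, Complex.norm_exp, Complex.norm_real]
    simp
  · refine Filter.Eventually.of_forall fun x => by fun_prop

lemma auxGauss (t : ℝ) (ht : 0 < t) (x : ℝ) :
    ∫ ξ : ℝ, Complex.exp (-(Complex.I * ξ * x)) * (Real.exp (-(ξ ^ 2 / (4 * t))) : ℂ)
      = ((2 * √π * t ^ (1/2 : ℝ) * Real.exp (-(t * x ^ 2)) : ℝ) : ℂ) := by
  have h := fourierIntegral_gaussian (b := ((1 / (4 * t) : ℝ) : ℂ))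
    (by rw [Complex.ofReal_re]; positivity) (-x : ℂ)
  have e1 : ((π : ℂ) / ((1 / (4 * t) : ℝ) : ℂ)) ^ (1 / 2 : ℂ) = ((2 * √π * t ^ (1/2 : ℝ) : ℝ) : ℂ) := by
    rw [← Complex.ofReal_div, show (1 / 2 : ℂ) = ((1 / 2 : ℝ) : ℂ) by push_cast; rfl,
      ← Complex.ofReal_cpow (by positivity)]
    congr 1
    rw [show π / (1 / (4 * t)) = 2 ^ 2 * π * t by field_simp; norm_num,
      Real.mul_rpow (by positivity) ht.le, Real.mul_rpow (by positivity) (by positivity),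
      ← Real.sqrt_eq_rpow, ← Real.sqrt_eq_rpow, Real.sqrt_sq (by norm_num)]
  rw [e1] at h
  rw [Complex.ofReal_mul, Complex.ofReal_exp]
  convert h using 2
  · ext ξ
    push_cast
    congr 2
    · ring
    · field_simp
  · congr 1
    push_cast
    field_simp

lemma auxC (φ ψ : ℝ → ℝ) (hφ : Integrable φ) (hψ : Integrable ψ) (t : ℝ) (ht : 0 < t) :
    ((∫ p : ℝ × ℝ, Real.exp (-(t * (p.1 - p.2) ^ 2)) * (φ p.1 * ψ p.2) : ℝ) : ℂ)
      = ((1 / (2 * √π) * t ^ (-(1/2) : ℝ) : ℝ) : ℂ) * ∫ ξ : ℝ, (Real.exp (-(ξ ^ 2 / (4 * t))) : ℂ)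
        * (fourierT φ ξ * (starRingEnd ℂ) (fourierT ψ ξ)) := by
  have hg : Integrable (fun ξ : ℝ => (Real.exp (-(ξ ^ 2 / (4 * t))) : ℂ)) := by
    have h0 : Integrable (fun ξ : ℝ => Real.exp (-(ξ ^ 2 / (4 * t)))) := by
      convert integrable_exp_neg_mul_sq (show 0 < 1 / (4 * t) by positivity) using 3
      ring
    exact h0.ofReal
  have hI : Integrable (Function.uncurry fun (ξ : ℝ) (p : ℝ × ℝ) =>
      Complex.exp (-(Complex.I * ξ * ((p.1 - p.2 : ℝ) : ℂ))) *
        ((Real.exp (-(ξ ^ 2 / (4 * t))) : ℂ) * ((φ p.1 : ℂ) * (ψ p.2 : ℂ))))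
      (volume.prod (volume : Measure (ℝ × ℝ))) := by
    refine Integrable.bdd_mul (c := 1) (hg.mul_prod
      ((hφ.ofReal (𝕜 := ℂ)).mul_prod (hψ.ofReal (𝕜 := ℂ)))) ?_ ?_
    · exact Continuous.aestronglyMeasurable (by fun_prop)
    · refine Filter.Eventually.of_forall fun x => ?_
      rw [Complex.norm_exp]
      simp
  have hsw := integral_integral_swap hI
  have L : ∀ ξ : ℝ, ∫ p : ℝ × ℝ, Complex.exp (-(Complex.I * ξ * ((p.1 - p.2 : ℝ) : ℂ))) *
        ((Real.exp (-(ξ ^ 2 / (4 * t))) : ℂ) * ((φ p.1 : ℂ) * (ψ p.2 : ℂ)))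
      = (Real.exp (-(ξ ^ 2 / (4 * t))) : ℂ) * (fourierT φ ξ * (starRingEnd ℂ) (fourierT ψ ξ)) := by
    intro ξ
    unfold fourierT
    rw [← integral_conj, ← integral_prod_mul, ← integral_const_mul]
    congr 1; ext p
    rw [map_mul, ← Complex.exp_conj, Complex.conj_ofReal]
    simp only [map_neg, map_mul, Complex.conj_I, Complex.conj_ofReal]
    rw [show -(Complex.I * ξ * ((p.1 - p.2 : ℝ) : ℂ))
      = -(Complex.I * ξ * p.1) + -(-Complex.I * ξ * p.2) by push_cast; ring, Complex.exp_add]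
    ring
  have R : ∀ p : ℝ × ℝ, ∫ ξ : ℝ, Complex.exp (-(Complex.I * ξ * ((p.1 - p.2 : ℝ) : ℂ))) *
        ((Real.exp (-(ξ ^ 2 / (4 * t))) : ℂ) * ((φ p.1 : ℂ) * (ψ p.2 : ℂ)))
      = ((2 * √π * t ^ (1/2 : ℝ) : ℝ) : ℂ) *
        ((Real.exp (-(t * (p.1 - p.2) ^ 2)) * (φ p.1 * ψ p.2) : ℝ) : ℂ) := by
    intro p
    simp_rw [← mul_assoc]
    rw [integral_mul_const, integral_mul_const, auxGauss t ht]
    push_cast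
    ring
  simp_rw [L, R] at hsw
  rw [hsw, integral_const_mul, ← mul_assoc, ← Complex.ofReal_mul]
  have : 1 / (2 * √π) * t ^ (-(1/2) : ℝ) * (2 * √π * t ^ (1/2 : ℝ)) = 1 := by
    have hp : 0 < √π := Real.sqrt_pos.2 Real.pi_pos
    rw [Real.rpow_neg ht.le]
    have := Real.rpow_pos_of_pos ht (1/2)
    field_simp
  rw [this, Complex.ofReal_one, one_mul]
  exact integral_ofReal.symm

/-- Kernel in physical space. -/
noncomputable def kerP (H : ℝ) (φ ψ : ℝ → ℝ) (z : ℝ × (ℝ × ℝ)) : ℝ :=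
  z.1 ^ (-H) * Real.exp (-(z.1 * (z.2.1 - z.2.2) ^ 2)) * (φ z.2.1 * ψ z.2.2)

/-- Kernel in Fourier space. -/
noncomputable def kerQ (H : ℝ) (φ ψ : ℝ → ℝ) (z : ℝ × ℝ) : ℂ :=
  ((z.1 ^ (-H) * z.1 ^ (-(1/2) : ℝ) * Real.exp (-(z.2 ^ 2 / (4 * z.1))) : ℝ) : ℂ) *
    (fourierT φ z.2 * (starRingEnd ℂ) (fourierT ψ z.2))

lemma ae_ne_diag : ∀ᵐ p : ℝ × ℝ, p.1 - p.2 ≠ 0 := by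
  have hm : MeasurableSet {p : ℝ × ℝ | ¬ (p.1 - p.2 ≠ 0)} := by
    simp only [not_not]
    exact (measurableSet_singleton (0:ℝ)).preimage (measurable_fst.sub measurable_snd)
  rw [ae_iff, Measure.volume_eq_prod, Measure.measure_prod_null hm]
  refine Filter.Eventually.of_forall fun x => ?_
  have : (Prod.mk x ⁻¹' {p : ℝ × ℝ | ¬ (p.1 - p.2 ≠ 0)}) = {x} := by
    ext y; simp [sub_eq_zero, eq_comm]
  beta_reduce
  rw [this]; simp

lemma kerP_meas (H : ℝ) (φ ψ : ℝ → ℝ) (hφ : Integrable φ) (hψ : Integrable ψ) :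
    AEStronglyMeasurable (kerP H φ ψ)
      ((volume.restrict (Set.Ioi (0:ℝ))).prod (volume : Measure (ℝ × ℝ))) := by
  refine AEStronglyMeasurable.mul ?_ ?_
  · exact Measurable.aestronglyMeasurable (by fun_prop)
  · exact (hφ.mul_prod hψ).aestronglyMeasurable.comp_snd

lemma kerQ_meas (H : ℝ) (φ ψ : ℝ → ℝ) (hφ : Integrable φ) (hψ : Integrable ψ) :
    AEStronglyMeasurable (kerQ H φ ψ)
      ((volume.restrict (Set.Ioi (0:ℝ))).prod (volume : Measure ℝ)) := by
  have c1 := (fourierT_cont φ hφ).measurable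
  have c2 := (fourierT_cont ψ hψ).measurable
  refine AEStronglyMeasurable.mul ?_ ?_
  · exact Measurable.aestronglyMeasurable (by fun_prop)
  · refine Measurable.aestronglyMeasurable ?_
    exact (c1.comp measurable_snd).mul (Complex.continuous_conj.measurable.comp (c2.comp measurable_snd))

lemma intA (H : ℝ) (h2 : H < 1) (x : ℝ) (hx : x ≠ 0) :
    Integrable (fun t => t ^ (-H) * Real.exp (-(t * x ^ 2))) (volume.restrict (Set.Ioi (0:ℝ))) := by
  refine Integrable.of_integral_ne_zero ?_
  rw [auxA H h2 x hx]
  have := Real.Gamma_pos_of_pos (show 0 < 1 - H by linarith)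
  positivity

lemma kerP_int_t (H : ℝ) (h2 : H < 1) (φ ψ : ℝ → ℝ) (p : ℝ × ℝ) (hp : p.1 - p.2 ≠ 0) :
    ∫ t in Set.Ioi (0:ℝ), kerP H φ ψ (t, p)
      = Gamma (1 - H) * (φ p.1 * ψ p.2 * |p.1 - p.2| ^ (2 * H - 2)) := by
  simp only [kerP]
  rw [integral_mul_const, auxA H h2 _ hp]
  ring

lemma kerP_int_p (H : ℝ) (φ ψ : ℝ → ℝ) (hφ : Integrable φ) (hψ : Integrable ψ)
    (t : ℝ) (ht : 0 < t) :
    ((∫ p, kerP H φ ψ (t, p) : ℝ) : ℂ) = ((1 / (2 * √π) : ℝ) : ℂ) * ∫ ξ, kerQ H φ ψ (t, ξ) := by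
  simp only [kerP, kerQ, mul_assoc]
  rw [integral_const_mul]
  simp only [Complex.ofReal_mul]
  simp only [mul_assoc]
  rw [auxC φ ψ hφ hψ t ht, integral_const_mul, integral_const_mul]
  push_cast
  ring

lemma kerP_nonneg (H : ℝ) (φ ψ : ℝ → ℝ) (hφ0 : ∀ x, 0 ≤ φ x) (hψ0 : ∀ x, 0 ≤ ψ x)
    (t : ℝ) (ht : 0 < t) (p : ℝ × ℝ) : 0 ≤ kerP H φ ψ (t, p) := by
  have := hφ0 p.1
  have := hψ0 p.2
  simp only [kerP]
  positivity

lemma kerP_integrable_p (H : ℝ) (φ ψ : ℝ → ℝ) (hφ : Integrable φ) (hψ : Integrable ψ)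
    (t : ℝ) (ht : 0 < t) : Integrable (fun p => kerP H φ ψ (t, p)) := by
  refine Integrable.bdd_mul (c := t ^ (-H)) (hφ.mul_prod hψ) ?_ ?_
  · exact Measurable.aestronglyMeasurable (by fun_prop)
  · refine Filter.Eventually.of_forall fun x => ?_
    rw [Real.norm_of_nonneg (by positivity)]
    have : Real.exp (-(t * (x.1 - x.2) ^ 2)) ≤ 1 := by
      rw [Real.exp_le_one_iff]
      have : 0 ≤ t * (x.1 - x.2) ^ 2 := by positivity
      linarith
    have h3 : 0 ≤ t ^ (-H) := by positivity
    exact mul_le_of_le_one_right h3 this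

lemma kerQ_integrable_ξ (H : ℝ) (φ ψ : ℝ → ℝ) (hφ : Integrable φ) (hψ : Integrable ψ)
    (t : ℝ) (ht : 0 < t) : Integrable (fun ξ => kerQ H φ ψ (t, ξ)) := by
  have c1 := fourierT_cont φ hφ
  have c2 := fourierT_cont ψ hψ
  have h0 : Integrable (fun ξ : ℝ => Real.exp (-(ξ ^ 2 / (4 * t)))) := by
    convert integrable_exp_neg_mul_sq (show 0 < 1 / (4 * t) by positivity) using 3
    ring
  have h3 := (h0.const_mul (t ^ (-H) * t ^ (-(1/2) : ℝ))).ofReal (𝕜 := ℂ)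
  refine Integrable.mul_bdd (c := (∫ x, ‖φ x‖) * ∫ x, ‖ψ x‖) h3 ?_ ?_
  · exact (c1.mul (Complex.continuous_conj.comp c2)).aestronglyMeasurable
  · refine Filter.Eventually.of_forall fun ξ => ?_
    rw [norm_mul, RCLike.norm_conj]
    exact mul_le_mul (fourierT_bound _ _) (fourierT_bound _ _) (norm_nonneg _)
      (integral_nonneg fun _ => norm_nonneg _)

lemma kerP_integrable_of_E (H : ℝ) (h2 : H < 1) (φ ψ : ℝ → ℝ)
    (hφ0 : ∀ x, 0 ≤ φ x) (hψ0 : ∀ x, 0 ≤ ψ x) (hφ : Integrable φ) (hψ : Integrable ψ)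
    (hE : Integrable (fun p : ℝ × ℝ => φ p.1 * ψ p.2 * |p.1 - p.2| ^ (2 * H - 2))) :
    Integrable (kerP H φ ψ)
      ((volume.restrict (Set.Ioi (0:ℝ))).prod (volume : Measure (ℝ × ℝ))) := by
  rw [integrable_prod_iff' (kerP_meas H φ ψ hφ hψ)]
  refine ⟨?_, ?_⟩
  · filter_upwards [ae_ne_diag] with p hp
    exact (intA H h2 _ hp).mul_const (φ p.1 * ψ p.2)
  · refine (hE.const_mul (Gamma (1 - H))).congr ?_
    filter_upwards [ae_ne_diag] with p hp
    rw [← kerP_int_t H h2 φ ψ p hp]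
    refine setIntegral_congr_fun measurableSet_Ioi fun t ht => ?_
    exact (Real.norm_of_nonneg (kerP_nonneg H φ ψ hφ0 hψ0 t ht p)).symm

lemma kerQ_norm (H : ℝ) (φ ψ : ℝ → ℝ) (t : ℝ) (ht : 0 < t) (ξ : ℝ) :
    ‖kerQ H φ ψ (t, ξ)‖ = (t ^ (-H) * t ^ (-(1/2) : ℝ) * Real.exp (-(ξ ^ 2 / (4 * t)))) *
      (‖fourierT φ ξ‖ * ‖fourierT ψ ξ‖) := by
  simp only [kerQ]
  rw [norm_mul, norm_mul, RCLike.norm_conj, Complex.norm_real, Real.norm_of_nonneg (by positivity)]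

lemma kerQ_self (H : ℝ) (φ : ℝ → ℝ) (t : ℝ) (ht : 0 < t) (ξ : ℝ) :
    kerQ H φ φ (t, ξ) = ((‖kerQ H φ φ (t, ξ)‖ : ℝ) : ℂ) := by
  rw [kerQ_norm H φ φ t ht]
  simp only [kerQ]
  rw [RCLike.mul_conj]
  push_cast
  simp [sq]

lemma kerQ_integrable_self (H : ℝ) (h2 : H < 1) (φ : ℝ → ℝ)
    (hφ0 : ∀ x, 0 ≤ φ x) (hφ : Integrable φ)
    (hE : Integrable (fun p : ℝ × ℝ => φ p.1 * φ p.2 * |p.1 - p.2| ^ (2 * H - 2))) :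
    Integrable (kerQ H φ φ)
      ((volume.restrict (Set.Ioi (0:ℝ))).prod (volume : Measure ℝ)) := by
  have hP := kerP_integrable_of_E H h2 φ φ hφ0 hφ0 hφ hφ hE
  rw [integrable_prod_iff (kerQ_meas H φ φ hφ hφ)]
  refine ⟨?_, ?_⟩
  · filter_upwards [ae_restrict_mem measurableSet_Ioi] with t ht
    exact kerQ_integrable_ξ H φ φ hφ hφ t ht
  · refine (hP.integral_prod_left.const_mul (2 * √π)).congr ?_
    filter_upwards [ae_restrict_mem measurableSet_Ioi] with t ht
    have h := kerP_int_p H φ φ hφ hφ t ht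
    have e : ∫ ξ, kerQ H φ φ (t, ξ) = ((∫ ξ, ‖kerQ H φ φ (t, ξ)‖ : ℝ) : ℂ) := by
      rw [← integral_complex_ofReal]
      exact integral_congr_ae (Filter.Eventually.of_forall fun ξ => kerQ_self H φ t ht ξ)
    rw [e, ← Complex.ofReal_mul] at h
    have h := Complex.ofReal_injective h
    have hp : 0 < √π := Real.sqrt_pos.2 Real.pi_pos
    rw [h]
    field_simp

lemma kerQ_integrable_mix (H : ℝ) (φ ψ : ℝ → ℝ) (hφ : Integrable φ) (hψ : Integrable ψ)
    (h1 : Integrable (kerQ H φ φ) ((volume.restrict (Set.Ioi (0:ℝ))).prod (volume : Measure ℝ)))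
    (h2 : Integrable (kerQ H ψ ψ) ((volume.restrict (Set.Ioi (0:ℝ))).prod (volume : Measure ℝ))) :
    Integrable (kerQ H φ ψ) ((volume.restrict (Set.Ioi (0:ℝ))).prod (volume : Measure ℝ)) := by
  refine (h1.norm.add h2.norm).mono' (kerQ_meas H φ ψ hφ hψ) ?_
  have hz : ∀ᵐ z : ℝ × ℝ ∂((volume.restrict (Set.Ioi (0:ℝ))).prod (volume : Measure ℝ)), 0 < z.1 :=
    Measure.quasiMeasurePreserving_fst.ae (ae_restrict_mem measurableSet_Ioi)
  filter_upwards [hz] with z hz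
  obtain ⟨t, ξ⟩ := z
  have ht : 0 < t := hz
  rw [Pi.add_apply, kerQ_norm H φ ψ t ht, kerQ_norm H φ φ t ht, kerQ_norm H ψ ψ t ht, ← mul_add]
  gcongr
  nlinarith [sq_nonneg (‖fourierT φ ξ‖ - ‖fourierT ψ ξ‖), sq_nonneg (‖fourierT φ ξ‖),
    sq_nonneg (‖fourierT ψ ξ‖)]

lemma main_identity (H : ℝ) (h1 : 1 / 2 < H) (h2 : H < 1) (φ ψ : ℝ → ℝ)
    (hφ0 : ∀ x, 0 ≤ φ x) (hψ0 : ∀ x, 0 ≤ ψ x) (hφ : Integrable φ) (hψ : Integrable ψ)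
    (hQ : Integrable (kerQ H φ ψ) ((volume.restrict (Set.Ioi (0:ℝ))).prod (volume : Measure ℝ))) :
    (((H * (2 * H - 1) * ∫ x : ℝ, ∫ y : ℝ, φ x * ψ y * |x - y| ^ (2 * H - 2) : ℝ)) : ℂ)
      = ((Gamma (2 * H + 1) * Real.sin (π * H) / (2 * π) : ℝ) : ℂ) *
        ∫ ξ : ℝ, fourierT φ ξ * (starRingEnd ℂ) (fourierT ψ ξ) *
          ((|ξ| ^ (1 - 2 * H) : ℝ) : ℂ) := by
  have hG : 0 < Gamma (1 - H) := Real.Gamma_pos_of_pos (by linarith)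
  have hP : Integrable (kerP H φ ψ)
      ((volume.restrict (Set.Ioi (0:ℝ))).prod (volume : Measure (ℝ × ℝ))) := by
    rw [integrable_prod_iff (kerP_meas H φ ψ hφ hψ)]
    refine ⟨?_, ?_⟩
    · filter_upwards [ae_restrict_mem measurableSet_Ioi] with t ht
      exact kerP_integrable_p H φ ψ hφ hψ t ht
    · refine (hQ.integral_prod_left.const_mul ((1 / (2 * √π) : ℝ) : ℂ)).re.congr ?_
      filter_upwards [ae_restrict_mem measurableSet_Ioi] with t ht
      rw [← kerP_int_p H φ ψ hφ hψ t ht]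
      simp only [RCLike.re_to_complex, Complex.ofReal_re]
      exact integral_congr_ae (Filter.Eventually.of_forall fun p =>
        (Real.norm_of_nonneg (kerP_nonneg H φ ψ hφ0 hψ0 t ht p)).symm)
  have hEae : (fun p => ∫ t in Set.Ioi (0:ℝ), kerP H φ ψ (t, p)) =ᵐ[volume]
      fun p => Gamma (1 - H) * (φ p.1 * ψ p.2 * |p.1 - p.2| ^ (2 * H - 2)) := by
    filter_upwards [ae_ne_diag] with p hp
    exact kerP_int_t H h2 φ ψ p hp
  have hE : Integrable (fun p : ℝ × ℝ => φ p.1 * ψ p.2 * |p.1 - p.2| ^ (2 * H - 2)) := by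
    have := (hP.integral_prod_right.congr hEae).const_mul (Gamma (1 - H))⁻¹
    refine this.congr (Filter.Eventually.of_forall fun p => ?_)
    simp only
    field_simp
  have hQae : (fun ξ => ∫ t in Set.Ioi (0:ℝ), kerQ H φ ψ (t, ξ)) =ᵐ[volume]
      fun ξ => ((Gamma (H - 1 / 2) * 2 ^ (2 * H - 1) : ℝ) : ℂ) *
        (fourierT φ ξ * (starRingEnd ℂ) (fourierT ψ ξ) * ((|ξ| ^ (1 - 2 * H) : ℝ) : ℂ)) := by
    filter_upwards [Measure.ae_ne volume (0:ℝ)] with ξ hξ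
    simp only [kerQ]
    rw [integral_mul_const, integral_complex_ofReal, auxB H h1 ξ hξ]
    push_cast
    ring
  have e1 : ∫ x : ℝ, ∫ y : ℝ, φ x * ψ y * |x - y| ^ (2 * H - 2)
      = ∫ p : ℝ × ℝ, φ p.1 * ψ p.2 * |p.1 - p.2| ^ (2 * H - 2) := (integral_prod _ hE).symm
  have e2 : ∫ t in Set.Ioi (0:ℝ), ∫ p, kerP H φ ψ (t, p)
      = Gamma (1 - H) * ∫ p : ℝ × ℝ, φ p.1 * ψ p.2 * |p.1 - p.2| ^ (2 * H - 2) := by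
    rw [integral_integral_swap (f := fun t p => kerP H φ ψ (t, p)) hP, integral_congr_ae hEae,
      integral_const_mul]
  have e3 : ∫ t in Set.Ioi (0:ℝ), ∫ ξ, kerQ H φ ψ (t, ξ)
      = ((Gamma (H - 1 / 2) * 2 ^ (2 * H - 1) : ℝ) : ℂ) * ∫ ξ : ℝ,
        fourierT φ ξ * (starRingEnd ℂ) (fourierT ψ ξ) * ((|ξ| ^ (1 - 2 * H) : ℝ) : ℂ) := by
    rw [integral_integral_swap (f := fun t p => kerQ H φ ψ (t, p)) hQ, integral_congr_ae hQae,
      integral_const_mul]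
  have e4 : ((∫ t in Set.Ioi (0:ℝ), ∫ p, kerP H φ ψ (t, p) : ℝ) : ℂ)
      = ((1 / (2 * √π) : ℝ) : ℂ) * ∫ t in Set.Ioi (0:ℝ), ∫ ξ, kerQ H φ ψ (t, ξ) := by
    rw [← integral_complex_ofReal, ← integral_const_mul]
    exact setIntegral_congr_fun measurableSet_Ioi fun t ht => kerP_int_p H φ ψ hφ hψ t ht
  rw [e1]
  rw [e2, e3] at e4
  have hc := congrArg (fun x : ℝ => (x : ℂ)) (auxConst H h1 h2)
  have hG' : ((Gamma (1 - H) : ℝ) : ℂ) ≠ 0 := by exact_mod_cast hG.ne'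
  apply mul_left_cancel₀ hG'
  simp only [Complex.ofReal_mul] at hc e4 ⊢
  linear_combination ((H : ℂ) * ((2 * H - 1 : ℝ) : ℂ)) * e4 +
    (∫ ξ : ℝ, fourierT φ ξ * (starRingEnd ℂ) (fourierT ψ ξ) * ((|ξ| ^ (1 - 2 * H) : ℝ) : ℂ)) * hc

/-- The fBm-type Parseval identity: for nonnegative integrable `φ, ψ` with finite energies,
`α_H ∫∫ φ(x)ψ(y)|x-y|^{2H-2} dx dy = c_H ∫ 𝓕φ(ξ) conj(𝓕ψ(ξ)) |ξ|^{1-2H} dξ`,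
and in particular `E(φ) = c_H ∫ |𝓕φ(ξ)|² |ξ|^{1-2H} dξ`, where
`α_H = H(2H-1)` and `c_H = Γ(2H+1) sin(πH)/(2π)`. -/
theorem stmt_10 (H : ℝ) (h1 : 1 / 2 < H) (h2 : H < 1)
    (φ ψ : ℝ → ℝ) (hφ0 : ∀ x, 0 ≤ φ x) (hψ0 : ∀ x, 0 ≤ ψ x)
    (hφint : Integrable φ) (hψint : Integrable ψ)
    (hφE : Integrable (fun p : ℝ × ℝ => φ p.1 * φ p.2 * |p.1 - p.2| ^ (2 * H - 2)))
    (hψE : Integrable (fun p : ℝ × ℝ => ψ p.1 * ψ p.2 * |p.1 - p.2| ^ (2 * H - 2))) :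
    (((H * (2 * H - 1) * ∫ x : ℝ, ∫ y : ℝ, φ x * ψ y * |x - y| ^ (2 * H - 2) : ℝ)) : ℂ)
      = ((Gamma (2 * H + 1) * Real.sin (π * H) / (2 * π) : ℝ) : ℂ) *
        ∫ ξ : ℝ, fourierT φ ξ * (starRingEnd ℂ) (fourierT ψ ξ) * ((|ξ| ^ (1 - 2 * H) : ℝ) : ℂ) ∧
    H * (2 * H - 1) * ∫ x : ℝ, ∫ y : ℝ, φ x * φ y * |x - y| ^ (2 * H - 2)
      = (Gamma (2 * H + 1) * Real.sin (π * H) / (2 * π)) *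
        ∫ ξ : ℝ, ‖fourierT φ ξ‖ ^ 2 * |ξ| ^ (1 - 2 * H) := by
  have q1 := kerQ_integrable_self H h2 φ hφ0 hφint hφE
  have q2 := kerQ_integrable_self H h2 ψ hψ0 hψint hψE
  refine ⟨main_identity H h1 h2 φ ψ hφ0 hψ0 hφint hψint
    (kerQ_integrable_mix H φ ψ hφint hψint q1 q2), ?_⟩
  have h := main_identity H h1 h2 φ φ hφ0 hφ0 hφint hφint q1
  have e : ∫ ξ : ℝ, fourierT φ ξ * (starRingEnd ℂ) (fourierT φ ξ) * ((|ξ| ^ (1 - 2 * H) : ℝ) : ℂ)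
      = ((∫ ξ : ℝ, ‖fourierT φ ξ‖ ^ 2 * |ξ| ^ (1 - 2 * H) : ℝ) : ℂ) := by
    rw [← integral_complex_ofReal]
    congr 1; ext ξ
    rw [RCLike.mul_conj]
    simp
  rw [e, ← Complex.ofReal_mul] at h
  exact Complex.ofReal_injective h
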